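/- For probability measures μ₁,…,μ_N ∈ 𝒫_p(ℝ^d), the multi-marginal optimal transport value C_{p-MM} = inf_{γ∈Π(μ₁,…,μ_N)} ∫ c_p dγ equals the coupled two-marginal barycenter value C_{p-C2M} = inf_{ν∈𝒫_p(ℝ^d)} Σᵢ λᵢ W_p^p(μᵢ, ν). -/

import Mathlib

open Finset MeasureTheory
open scoped ENNReal

/-- The `p`-th power Wasserstein cost `W_p^p(μ,ν)` on `ℝ^d`, defined as the
infimum over couplings of the transport cost `∫ ‖x-y‖^p`. -/
noncomputable def wassersteinPPow (d : ℕ) (p : ℝ)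
    (μ ν : Measure (EuclideanSpace ℝ (Fin d))) : ℝ≥0∞ :=
  ⨅ η : {η : Measure (EuclideanSpace ℝ (Fin d) × EuclideanSpace ℝ (Fin d)) //
      η.map Prod.fst = μ ∧ η.map Prod.snd = ν},
    ∫⁻ q, ENNReal.ofReal (‖q.1 - q.2‖ ^ p) ∂(η.1)

/-!
Couplings `ηᵢ` of `μᵢ` with a common `ν` can be glued along `ν` into the joint law of a random
vector `(y, x₁, …, x_N)`; evaluating the barycentric cost `⨅ z, ∑ i, cᵢ(xᵢ, z)` at the competitor
`z = y` bounds the multi-marginal value by `∑ i, ∫ cᵢ dηᵢ`. Conversely, given a multi-marginal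
coupling `γ`, an `ε`-optimal barycenter can be selected measurably as `z = Z(x₁, …, x_N)`, and
the laws of the pairs `(xᵢ, Z)` under `γ` couple `μᵢ` to `ν = Z_* γ`. Finally, a `ν` at finite
`p`-cost from a measure with finite `p`-th moment has itself a finite `p`-th moment, so restricting
`ν` to `𝒫_p` does not change the infimum.
-/

open ProbabilityTheory TopologicalSpace

lemma sum_iInf_eq_iInf_sum_pi {ι : Type*} [Fintype ι] {κ : ι → Type*}
    (f : ∀ i, κ i → ℝ≥0∞) :
    ∑ i, ⨅ k, f i k = ⨅ g : ∀ i, κ i, ∑ i, f i (g i) := by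
  classical
  by_cases hκ : ∀ i, Nonempty (κ i)
  · have coordinate_iInf (i : ι) : ⨅ k, f i k = ⨅ g : ∀ i, κ i, f i (g i) :=
      (Function.surjective_eval i).iInf_comp (f i) |>.symm
    simp only [coordinate_iInf]
    refine (ENNReal.iInf_sum fun _ g h => ⟨fun i => if f i (g i) ≤ f i (h i) then g i else h i,
      fun i _ => ?_⟩).symm
    beta_reduce
    split_ifs with hle
    · exact ⟨le_rfl, hle⟩
    · exact ⟨(not_le.1 hle).le, le_rfl⟩
  · obtain ⟨i, hi⟩ := not_forall.1 hκ
    have : IsEmpty (κ i) := not_nonempty_iff.1 hi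
    have : IsEmpty (∀ i, κ i) := ⟨fun g => isEmptyElim (g i)⟩
    rw [iInf_of_empty, ENNReal.sum_eq_top]
    exact ⟨i, mem_univ i, iInf_of_empty _⟩

section Gluing

variable {ι : Type*} {X : ι → Type*} [∀ i, MeasurableSpace (X i)]
  {Y : Type*} [MeasurableSpace Y]

/-- The product of finitely many Markov kernels with a common source: given the source point, the
coordinates are independent. -/
noncomputable def piKernel [Fintype ι] (κ : ∀ i, Kernel Y (X i)) [∀ i, IsMarkovKernel (κ i)] :
    Kernel Y (∀ i, X i) where
  toFun y := Measure.pi fun i => κ i y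
  measurable' := by
    refine Measurable.measure_of_isPiSystem_of_isProbabilityMeasure generateFrom_pi.symm
      isPiSystem_pi ?_
    rintro _ ⟨s, hs, rfl⟩
    simp only [Measure.pi_pi]
    exact Finset.measurable_prod _ fun i _ => (κ i).measurable_coe (hs i (Set.mem_univ i))

instance [Fintype ι] (κ : ∀ i, Kernel Y (X i)) [∀ i, IsMarkovKernel (κ i)] :
    IsMarkovKernel (piKernel κ) :=
  ⟨fun y => inferInstanceAs (IsProbabilityMeasure (Measure.pi fun i => κ i y))⟩

lemma piKernel_map_eval [Fintype ι] (κ : ∀ i, Kernel Y (X i)) [∀ i, IsMarkovKernel (κ i)]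
    (i : ι) :
    (piKernel κ).map (fun x => x i) = κ i := by
  ext1 y
  rw [Kernel.map_apply _ (measurable_pi_apply i)]
  exact (measurePreserving_eval (fun i => κ i y) i).map_eq

lemma exists_measure_map_eval_eq_of_snd_eq [Finite ι] [∀ i, StandardBorelSpace (X i)]
    [∀ i, Nonempty (X i)] (ν : Measure Y) [IsProbabilityMeasure ν] (η : ∀ i, Measure (X i × Y))
    (hη : ∀ i, (η i).snd = ν) :
    ∃ Γ : Measure (Y × ∀ i, X i), ∀ i, Γ.map (fun q => (q.2 i, q.1)) = η i := by
  have := Fintype.ofFinite ι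
  have (i : ι) : IsProbabilityMeasure (η i) := by
    have : IsProbabilityMeasure (η i).snd := (hη i).symm ▸ ‹IsProbabilityMeasure ν›
    exact (Measure.isProbabilityMeasure_map_iff measurable_snd.aemeasurable).1 this
  have (i : ι) : IsProbabilityMeasure ((η i).map Prod.swap) :=
    Measure.isProbabilityMeasure_map measurable_swap.aemeasurable
  refine ⟨ν ⊗ₘ piKernel fun i => ((η i).map Prod.swap).condKernel, fun i => ?_⟩
  have disintegration : ν ⊗ₘ ((η i).map Prod.swap).condKernel = (η i).map Prod.swap := by
    rw [← hη i, ← Measure.fst_map_swap]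
    exact ((η i).map Prod.swap).disintegrate _
  calc (ν ⊗ₘ piKernel fun i => ((η i).map Prod.swap).condKernel).map (fun q => (q.2 i, q.1))
      = ((ν ⊗ₘ piKernel fun i => ((η i).map Prod.swap).condKernel).map
          (Prod.map id fun x => x i)).map Prod.swap := by
        rw [Measure.map_map measurable_swap (by fun_prop)]; rfl
    _ = ((η i).map Prod.swap).map Prod.swap := by
        rw [← Measure.compProd_map (measurable_pi_apply i), piKernel_map_eval, disintegration]
    _ = η i := by
        rw [Measure.map_map measurable_swap measurable_swap, Prod.swap_swap_eq, Measure.map_id]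

end Gluing

lemma exists_measurable_forall_le_iInf_add {Ω Y : Type*} [MeasurableSpace Ω]
    [TopologicalSpace Y] [SeparableSpace Y] [Nonempty Y] [MeasurableSpace Y]
    {F : Ω → Y → ℝ≥0∞} (hF : ∀ y, Measurable fun ω => F ω y) (hF' : ∀ ω, Continuous (F ω))
    {ε : ℝ≥0∞} (hε : ε ≠ 0) :
    ∃ Z : Ω → Y, Measurable Z ∧ ∀ ω, F ω (Z ω) ≤ (⨅ y, F ω y) + ε := by
  classical
  have iInf_eq (ω : Ω) : ⨅ y, F ω y = ⨅ n, F ω (denseSeq Y n) := by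
    rw [← (denseRange_denseSeq Y).ciInf' (hF' ω), iInf_subtype, iInf_range]
  have exists_index (ω : Ω) : ∃ n, F ω (denseSeq Y n) ≤ (⨅ y, F ω y) + ε := by
    rw [iInf_eq]
    rcases eq_or_ne (⨅ n, F ω (denseSeq Y n)) ⊤ with htop | htop
    · exact ⟨0, by simp [htop]⟩
    · obtain ⟨n, hn⟩ := iInf_lt_iff.1 (ENNReal.lt_add_right htop hε)
      exact ⟨n, hn.le⟩
  have measurable_iInf : Measurable fun ω => ⨅ y, F ω y := by
    simp only [iInf_eq]
    exact .iInf fun n => hF _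
  exact ⟨fun ω => denseSeq Y (Nat.find (exists_index ω)),
    .find (f := fun n _ => denseSeq Y n) (fun _ => measurable_const)
      (fun n => measurableSet_le (hF _) (measurable_iInf.add_const ε)) exists_index,
    fun ω => Nat.find_spec (exists_index ω)⟩

section TransportCost

variable {X Y : Type*} [MeasurableSpace X] [MeasurableSpace Y]

/-- The optimal transport cost from `μ` to `ν` for the cost function `c`. Its value is `⊤` when
`μ` and `ν` have no coupling, for instance because their masses differ. -/
noncomputable def transportCost (c : X → Y → ℝ≥0∞) (μ : Measure X) (ν : Measure Y) : ℝ≥0∞ :=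
  ⨅ η : {η : Measure (X × Y) // η.fst = μ ∧ η.snd = ν}, ∫⁻ q, c q.1 q.2 ∂η.1

lemma transportCost_const_mul {a : ℝ≥0∞} (ha₀ : a ≠ 0) (ha : a ≠ ⊤) (c : X → Y → ℝ≥0∞)
    (μ : Measure X) (ν : Measure Y) :
    transportCost (fun x y => a * c x y) μ ν = a * transportCost c μ ν := by
  simp only [transportCost, ENNReal.mul_iInf_of_ne ha₀ ha, lintegral_const_mul' a _ ha]

lemma transportCost_map_map_le {Ω : Type*} [MeasurableSpace Ω] {γ : Measure Ω} {f : Ω → X}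
    {g : Ω → Y} (hf : Measurable f) (hg : Measurable g) {c : X → Y → ℝ≥0∞}
    (hc : Measurable fun q : X × Y => c q.1 q.2) :
    transportCost c (γ.map f) (γ.map g) ≤ ∫⁻ ω, c (f ω) (g ω) ∂γ := by
  rw [transportCost]
  exact iInf_le_of_le
    ⟨γ.map fun ω => (f ω, g ω), Measure.fst_map_prodMk hg, Measure.snd_map_prodMk hf⟩
    (lintegral_map hc (hf.prodMk hg)).le

end TransportCost

section Multimarginal

variable {ι : Type*} [Fintype ι] {X : ι → Type*} [∀ i, MeasurableSpace (X i)]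
  {Y : Type*} [MeasurableSpace Y]

/-- The multi-marginal optimal transport value for the marginals `μ i` and the cost `C`. -/
noncomputable def multimarginalCost (C : (∀ i, X i) → ℝ≥0∞) (μ : ∀ i, Measure (X i)) : ℝ≥0∞ :=
  ⨅ γ : {γ : Measure (∀ i, X i) // ∀ i, γ.map (fun x => x i) = μ i}, ∫⁻ x, C x ∂γ.1

lemma multimarginalCost_le_sum_transportCost [∀ i, StandardBorelSpace (X i)]
    [∀ i, Nonempty (X i)] {c : ∀ i, X i → Y → ℝ≥0∞}
    (hc : ∀ i, Measurable fun q : X i × Y => c i q.1 q.2) (μ : ∀ i, Measure (X i))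
    (ν : Measure Y) [IsProbabilityMeasure ν] :
    multimarginalCost (fun x => ⨅ z, ∑ i, c i (x i) z) μ ≤ ∑ i, transportCost (c i) (μ i) ν := by
  simp only [transportCost, sum_iInf_eq_iInf_sum_pi]
  refine le_iInf fun η => ?_
  obtain ⟨Γ, hΓ⟩ := exists_measure_map_eval_eq_of_snd_eq ν (fun i => (η i).1) fun i => (η i).2.2
  have measurable_pair (i : ι) : Measurable fun q : Y × ∀ i, X i => (q.2 i, q.1) := by fun_prop
  have marginal (i : ι) : (Γ.map Prod.snd).map (fun x => x i) = μ i := by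
    rw [← (η i).2.1, ← hΓ i, Measure.fst, Measure.map_map measurable_fst (measurable_pair i),
      Measure.map_map (measurable_pi_apply i) measurable_snd]
    rfl
  calc multimarginalCost (fun x => ⨅ z, ∑ i, c i (x i) z) μ
      ≤ ∫⁻ x, ⨅ z, ∑ i, c i (x i) z ∂Γ.map Prod.snd :=
        iInf_le_of_le ⟨Γ.map Prod.snd, marginal⟩ le_rfl
    _ ≤ ∫⁻ q, ⨅ z, ∑ i, c i (q.2 i) z ∂Γ := lintegral_map_le _ _
    _ ≤ ∫⁻ q, ∑ i, c i (q.2 i) q.1 ∂Γ := lintegral_mono fun q => iInf_le _ q.1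
    _ = ∑ i, ∫⁻ q, c i (q.2 i) q.1 ∂Γ :=
        lintegral_finsetSum _ fun i _ => (hc i).comp (measurable_pair i)
    _ = ∑ i, ∫⁻ q, c i q.1 q.2 ∂(η i).1 := by
        refine sum_congr rfl fun i _ => ?_
        rw [← hΓ i, lintegral_map (hc i) (measurable_pair i)]

lemma iInf_sum_transportCost_le_lintegral [TopologicalSpace Y] [SeparableSpace Y] [Nonempty Y]
    {c : ∀ i, X i → Y → ℝ≥0∞} (hc : ∀ i, Measurable fun q : X i × Y => c i q.1 q.2)
    (hc' : ∀ i x, Continuous (c i x)) (γ : Measure (∀ i, X i)) [IsProbabilityMeasure γ] :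
    ⨅ ν : ProbabilityMeasure Y, ∑ i, transportCost (c i) (γ.map fun x => x i) ν
      ≤ ∫⁻ x, ⨅ z, ∑ i, c i (x i) z ∂γ := by
  refine ENNReal.le_of_forall_pos_le_add fun ε hε _ => ?_
  obtain ⟨Z, hZ, Z_le⟩ := exists_measurable_forall_le_iInf_add
    (F := fun (x : ∀ i, X i) z => ∑ i, c i (x i) z)
    (fun z => Finset.measurable_sum _ fun i _ =>
      (hc i).comp ((measurable_pi_apply i).prodMk measurable_const))
    (fun x => continuous_finsetSum _ fun i _ => hc' i (x i))
    (ENNReal.coe_pos.2 hε).ne'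
  calc ⨅ ν : ProbabilityMeasure Y, ∑ i, transportCost (c i) (γ.map fun x => x i) ν
      ≤ ∑ i, transportCost (c i) (γ.map fun x => x i) (γ.map Z) :=
        iInf_le_of_le ⟨γ.map Z, Measure.isProbabilityMeasure_map hZ.aemeasurable⟩ le_rfl
    _ ≤ ∑ i, ∫⁻ x, c i (x i) (Z x) ∂γ :=
        sum_le_sum fun i _ => transportCost_map_map_le (measurable_pi_apply i) hZ (hc i)
    _ = ∫⁻ x, ∑ i, c i (x i) (Z x) ∂γ :=
        (lintegral_finsetSum _ fun i _ => (hc i).comp ((measurable_pi_apply i).prodMk hZ)).symm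
    _ ≤ ∫⁻ x, (⨅ z, ∑ i, c i (x i) z) + ε ∂γ := lintegral_mono Z_le
    _ = ∫⁻ x, ⨅ z, ∑ i, c i (x i) z ∂γ + ε := by
        rw [lintegral_add_right _ measurable_const, lintegral_const, measure_univ, mul_one]

theorem multimarginalCost_eq_iInf_sum_transportCost [Nonempty ι]
    [∀ i, StandardBorelSpace (X i)] [TopologicalSpace Y] [SeparableSpace Y] [Nonempty Y]
    {c : ∀ i, X i → Y → ℝ≥0∞} (hc : ∀ i, Measurable fun q : X i × Y => c i q.1 q.2)
    (hc' : ∀ i x, Continuous (c i x)) (μ : ∀ i, Measure (X i)) [∀ i, IsProbabilityMeasure (μ i)] :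
    multimarginalCost (fun x => ⨅ z, ∑ i, c i (x i) z) μ
      = ⨅ ν : ProbabilityMeasure Y, ∑ i, transportCost (c i) (μ i) ν := by
  have (i : ι) : Nonempty (X i) := (μ i).nonempty_of_neZero
  refine le_antisymm (le_iInf fun ν => multimarginalCost_le_sum_transportCost hc μ ν)
    (le_iInf fun ⟨γ, hγ⟩ => ?_)
  obtain ⟨i⟩ := ‹Nonempty ι›
  have : IsProbabilityMeasure (γ.map fun x => x i) := hγ i ▸ inferInstance
  have : IsProbabilityMeasure γ :=
    (Measure.isProbabilityMeasure_map_iff (measurable_pi_apply i).aemeasurable).1 this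
  simpa only [hγ] using iInf_sum_transportCost_le_lintegral hc hc' γ

end Multimarginal

section Moments

variable {E : Type*} [NormedAddCommGroup E] [MeasurableSpace E] [BorelSpace E]
  [SecondCountableTopology E] {p : ℝ}

lemma memLp_ofReal_iff_lintegral_lt_top {Ω : Type*} [MeasurableSpace Ω] {γ : Measure Ω} {f : Ω → E}
    (hp : 0 < p) (hf : Measurable f) :
    MemLp f (ENNReal.ofReal p) γ ↔ ∫⁻ ω, ENNReal.ofReal (‖f ω‖ ^ p) ∂γ < ⊤ := by
  have ofReal_norm_rpow (ω : Ω) : ENNReal.ofReal (‖f ω‖ ^ p) = ‖f ω‖ₑ ^ p := by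
    rw [← ENNReal.ofReal_rpow_of_nonneg (norm_nonneg _) hp.le, ofReal_norm]
  rw [MemLp, and_iff_right hf.aestronglyMeasurable, eLpNorm_lt_top_iff_lintegral_rpow_enorm_lt_top
    (ENNReal.ofReal_pos.2 hp).ne' ENNReal.ofReal_ne_top, ENNReal.toReal_ofReal hp.le]
  simp only [ofReal_norm_rpow]

lemma lintegral_norm_rpow_lt_top_of_transportCost_lt_top (hp : 0 < p) {μ ν : Measure E}
    (hμ : ∫⁻ x, ENNReal.ofReal (‖x‖ ^ p) ∂μ < ⊤)
    (hμν : transportCost (fun x y => ENNReal.ofReal (‖x - y‖ ^ p)) μ ν < ⊤) :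
    ∫⁻ y, ENNReal.ofReal (‖y‖ ^ p) ∂ν < ⊤ := by
  obtain ⟨⟨η, rfl, rfl⟩, hη⟩ := iInf_lt_iff.1 hμν
  rw [Measure.fst, lintegral_map (by fun_prop) measurable_fst,
    ← memLp_ofReal_iff_lintegral_lt_top hp measurable_fst] at hμ
  rw [← memLp_ofReal_iff_lintegral_lt_top hp (by fun_prop)] at hη
  rw [Measure.snd, lintegral_map (by fun_prop) measurable_snd,
    ← memLp_ofReal_iff_lintegral_lt_top hp measurable_snd]
  simpa only [Pi.sub_def, sub_sub_cancel] using hμ.sub hη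

end Moments

theorem multimarginal_eq_coupled_two_marginal_general {ι E : Type*} [Fintype ι]
    [NormedAddCommGroup E] [CompleteSpace E] [SecondCountableTopology E] [MeasurableSpace E]
    [BorelSpace E] {p : ℝ} (hp : 0 < p) {l : ι → ℝ} (hl : ∀ i, 0 < l i)
    (μ : ι → Measure E) [∀ i, IsProbabilityMeasure (μ i)]
    (hμ : ∃ i, ∫⁻ y, ENNReal.ofReal (‖y‖ ^ p) ∂μ i < ⊤) :
    multimarginalCost (fun x => ENNReal.ofReal (⨅ z, ∑ i, l i * ‖x i - z‖ ^ p)) μ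
      = ⨅ ν : {ν : Measure E // IsProbabilityMeasure ν ∧ ∫⁻ y, ENNReal.ofReal (‖y‖ ^ p) ∂ν < ⊤},
        ∑ i, ENNReal.ofReal (l i)
          * transportCost (fun x y => ENNReal.ofReal (‖x - y‖ ^ p)) (μ i) ν.1 := by
  obtain ⟨i₀, hi₀⟩ := hμ
  have : Nonempty ι := ⟨i₀⟩
  have weight_ne_zero (i : ι) : ENNReal.ofReal (l i) ≠ 0 := (ENNReal.ofReal_pos.2 (hl i)).ne'
  have cost_eq (x : ι → E) : ENNReal.ofReal (⨅ z, ∑ i, l i * ‖x i - z‖ ^ p)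
      = ⨅ z, ∑ i, ENNReal.ofReal (l i) * ENNReal.ofReal (‖x i - z‖ ^ p) := by
    simp only [ENNReal.ofReal_iInf, ← ENNReal.ofReal_mul (hl _).le]
    refine iInf_congr fun z => ENNReal.ofReal_sum_of_nonneg fun i _ => ?_
    have := hl i
    positivity
  have continuous_cost (i : ι) (x : E) :
      Continuous fun z => ENNReal.ofReal (l i) * ENNReal.ofReal (‖x - z‖ ^ p) :=
    (ENNReal.continuous_const_mul ENNReal.ofReal_ne_top).comp <| ENNReal.continuous_ofReal.comp <|
      (continuous_const.sub continuous_id).norm.rpow_const fun _ => .inr hp.le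
  simp only [cost_eq]
  rw [multimarginalCost_eq_iInf_sum_transportCost (Y := E)
    (c := fun i x z => ENNReal.ofReal (l i) * ENNReal.ofReal (‖x - z‖ ^ p)) (by fun_prop)
    continuous_cost μ]
  simp only [transportCost_const_mul (weight_ne_zero _) ENNReal.ofReal_ne_top]
  refine le_antisymm (le_iInf fun ν => iInf_le_of_le ⟨ν.1, ν.2.1⟩ le_rfl) (le_iInf fun ν => ?_)
  by_cases hν : ∑ i, ENNReal.ofReal (l i)
      * transportCost (fun x y => ENNReal.ofReal (‖x - y‖ ^ p)) (μ i) ν = ⊤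
  · exact le_top.trans_eq hν.symm
  · have hi₀ν := ENNReal.lt_top_of_mul_ne_top_right
      (ENNReal.sum_ne_top.1 hν i₀ (mem_univ i₀)) (weight_ne_zero i₀)
    exact iInf_le_of_le ⟨ν, inferInstance,
      lintegral_norm_rpow_lt_top_of_transportCost_lt_top hp hi₀ hi₀ν⟩ le_rfl

/-- the multi-marginal value `C_{p-MM}` equals the coupled
two-marginal barycenter value `C_{p-C2M} = inf_ν ∑ i, λᵢ W_p^p(μᵢ,ν)` over
probability measures `ν` with finite `p`-th moment. -/
theorem multimarginal_eq_coupled_two_marginal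
    (d N : ℕ) (hd : 1 ≤ d) (hN : 1 ≤ N) (p : ℝ) (hp : 1 < p)
    (l : Fin N → ℝ) (hl : ∀ i, 0 < l i) (hsum : ∑ i, l i = 1)
    (μ : Fin N → Measure (EuclideanSpace ℝ (Fin d)))
    (hprob : ∀ i, IsProbabilityMeasure (μ i))
    (hmom : ∀ i, ∫⁻ y, ENNReal.ofReal (‖y‖ ^ p) ∂(μ i) < ⊤) :
    (⨅ γ : {γ : Measure (Fin N → EuclideanSpace ℝ (Fin d)) //
        ∀ i, γ.map (fun x => x i) = μ i},
      ∫⁻ x, ENNReal.ofReal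
        (⨅ z : EuclideanSpace ℝ (Fin d), ∑ i, l i * ‖x i - z‖ ^ p)
          ∂(γ.1))
    = ⨅ ν : {ν : Measure (EuclideanSpace ℝ (Fin d)) //
        IsProbabilityMeasure ν ∧ ∫⁻ y, ENNReal.ofReal (‖y‖ ^ p) ∂ν < ⊤},
      ∑ i, ENNReal.ofReal (l i) * wassersteinPPow d p (μ i) (ν.1) :=
  multimarginal_eq_coupled_two_marginal_general (zero_lt_one.trans hp) hl μ ⟨⟨0, hN⟩, hmom _⟩
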